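/- Let Λ be a finite simple graph, u a vertex of Λ of degree at least 2, and w₁, w₂ two distinct vertices adjacent to u. Then there is an injective group homomorphism from G(Λ) into G(Λ_u⁻(w₁,w₂)). -/

import Mathlib

open SimpleGraph

/-- The set of commutator relations of a graph: one commutator for each edge. -/
def raagRels {V : Type} (G : SimpleGraph V) : Set (FreeGroup V) :=
  {r | ∃ u v : V, G.Adj u v ∧
    r = FreeGroup.of u * FreeGroup.of v * (FreeGroup.of u)⁻¹ * (FreeGroup.of v)⁻¹}

/-- The right-angled Artin group `A(G)` of a graph `G`. -/
abbrev RAAG {V : Type} (G : SimpleGraph V) : Type := PresentedGroup (raagRels G)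

/-- `G(Γ) = A(Γᶜ)`, the RAAG on the complement graph. -/
abbrev GG {V : Type} (G : SimpleGraph V) : Type := RAAG Gᶜ

/-- A linear forest: an acyclic graph all of whose vertices have degree at most 2. -/
def IsLinearForest {V : Type} (G : SimpleGraph V) : Prop :=
  G.IsAcyclic ∧ ∀ v : V, (G.neighborSet v).ncard ≤ 2

/-- The star of a vertex: the vertex together with its neighbours. -/
def starSet {V : Type} (G : SimpleGraph V) (v : V) : Set V :=
  insert v (G.neighborSet v)

/-- The double `D_v(G)` of `G` along the star of `v`: original vertices together with
copies of the vertices outside the star. -/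
def GraphDouble {V : Type} (G : SimpleGraph V) (v : V) :
    SimpleGraph (V ⊕ {w : V // w ∉ starSet G v}) :=
  SimpleGraph.fromRel (fun x y =>
    match x, y with
    | Sum.inl a, Sum.inl b => G.Adj a b
    | Sum.inr a, Sum.inr b => G.Adj a.1 b.1
    | Sum.inl a, Sum.inr b => a ∈ starSet G v ∧ G.Adj a b.1
    | Sum.inr _, Sum.inl _ => False)

/-- Subdivision of the edge `[v,w]` of `Λ`, with `none` as the new vertex. -/
def SubdivEdge {V : Type} (Λ : SimpleGraph V) (v w : V) : SimpleGraph (Option V) :=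
  SimpleGraph.fromRel (fun x y =>
    match x, y with
    | some a, some b => Λ.Adj a b ∧ ¬((a = v ∧ b = w) ∨ (a = w ∧ b = v))
    | some a, none => a = v ∨ a = w
    | none, some _ => False
    | none, none => False)

/-- The graph `Λ_u⁻(w₁,w₂)`, with `none` as the new vertex `v`. -/
def MinusGraph {V : Type} (Λ : SimpleGraph V) (u w₁ w₂ : V) : SimpleGraph (Option V) :=
  SimpleGraph.fromRel (fun x y =>
    match x, y with
    | some a, some b => Λ.Adj a b ∧
        ¬((a = u ∧ b = w₁) ∨ (a = w₁ ∧ b = u) ∨ (a = u ∧ b = w₂) ∨ (a = w₂ ∧ b = u))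
    | some a, none => a = w₁ ∨ a = u ∨ a = w₂
    | none, some _ => False
    | none, none => False)

/-- The graph `Λ_u⁺(w₁,w₂)`: `Λ_u⁻(w₁,w₂)` with the edge `[u,w₂]` added back. -/
def PlusGraph {V : Type} (Λ : SimpleGraph V) (u w₁ w₂ : V) : SimpleGraph (Option V) :=
  SimpleGraph.fromRel (fun x y =>
    (MinusGraph Λ u w₁ w₂).Adj x y ∨ (x = some u ∧ y = some w₂))

theorem raag_comm {V : Type} (G : SimpleGraph V) {a b : V} (h : G.Adj a b) :
    (PresentedGroup.of a : RAAG G) * PresentedGroup.of b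
      = PresentedGroup.of b * PresentedGroup.of a := by
  have hr : (PresentedGroup.mk (raagRels G)) (FreeGroup.of a * FreeGroup.of b *
      (FreeGroup.of a)⁻¹ * (FreeGroup.of b)⁻¹) = 1 :=
    PresentedGroup.one_of_mem ⟨a, b, h, rfl⟩
  simp only [map_mul, map_inv] at hr
  have h2 := mul_inv_eq_one.mp hr
  exact mul_inv_eq_iff_eq_mul.mp h2

theorem raag_lift {V H : Type} [Group H] (G : SimpleGraph V) (f : V → H)
    (hf : ∀ a b, G.Adj a b → f a * f b = f b * f a) :
    ∃ φ : RAAG G →* H, ∀ a, φ (PresentedGroup.of a) = f a := by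
  refine ⟨PresentedGroup.toGroup (f := f) ?_, fun a => PresentedGroup.toGroup.of _⟩
  rintro r ⟨a, b, hab, rfl⟩
  simp [hf a b hab]

/-- `G(Λ)` embeds into `G(Λ_u⁻(w₁,w₂))`. -/
theorem statement14 {V : Type} [Fintype V] (Λ : SimpleGraph V) (u w₁ w₂ : V)
    (hdeg : 2 ≤ (Λ.neighborSet u).ncard) (hne : w₁ ≠ w₂)
    (h1 : Λ.Adj u w₁) (h2 : Λ.Adj u w₂) :
    ∃ φ : GG Λ →* GG (MinusGraph Λ u w₁ w₂), Function.Injective φ := by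
  classical
  have hu1 : u ≠ w₁ := h1.ne
  have hu2 : u ≠ w₂ := h2.ne
  -- the generator map into the bigger group
  obtain ⟨φ, hφ⟩ := raag_lift (H := GG (MinusGraph Λ u w₁ w₂)) Λᶜ
    (fun y => if y = u then
        PresentedGroup.of none * PresentedGroup.of (some u) * (PresentedGroup.of none)⁻¹
      else PresentedGroup.of (some y)) (by
    have key : ∀ b, b ≠ u → ¬ Λ.Adj u b →
        Commute (PresentedGroup.of none * PresentedGroup.of (some u) *
          (PresentedGroup.of none)⁻¹ : GG (MinusGraph Λ u w₁ w₂))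
          (PresentedGroup.of (some b)) := by
      intro b hb hub
      have hb1 : b ≠ w₁ := by rintro rfl; exact hub h1
      have hb2 : b ≠ w₂ := by rintro rfl; exact hub h2
      have c1 : Commute (PresentedGroup.of none : GG (MinusGraph Λ u w₁ w₂))
          (PresentedGroup.of (some b)) := by
        apply raag_comm
        simp [MinusGraph, hb, hb1, hb2]
      have c2 : Commute (PresentedGroup.of (some u) : GG (MinusGraph Λ u w₁ w₂))
          (PresentedGroup.of (some b)) := by
        apply raag_comm
        have hbu : ¬ Λ.Adj b u := fun h => hub h.symm
        simp [MinusGraph, hb.symm, hub, hbu]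
      exact (c1.mul_left c2).mul_left c1.inv_left
    intro a b hab
    rw [SimpleGraph.compl_adj] at hab
    obtain ⟨hne', hnadj⟩ := hab
    by_cases ha : a = u
    · subst ha
      simpa [hne'.symm] using (key b hne'.symm hnadj).eq
    · by_cases hb : b = u
      · subst hb
        simpa [ha] using (key a ha (fun h => hnadj h.symm)).symm.eq
      · simp only [ha, hb, if_false]
        apply raag_comm
        have hba : ¬ Λ.Adj b a := fun h => hnadj h.symm
        simp [MinusGraph, hne', hnadj, hba])
  let s1 : V → GG Λ := fun y => if y = u then 1 else PresentedGroup.of y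
  let s2 : V → GG Λ := fun y => if y = w₁ ∨ y = w₂ then 1 else PresentedGroup.of y
  let F : Option V → Equiv.Perm (GG Λ ⊕ GG Λ) := fun o => match o with
    | none => Equiv.sumComm _ _
    | some y => Equiv.sumCongr (Equiv.mulLeft (s1 y)) (Equiv.mulLeft (s2 y))
  obtain ⟨ψ, hψ⟩ := raag_lift (MinusGraph Λ u w₁ w₂)ᶜ F (by
    have key : ∀ b, b ≠ w₁ → b ≠ u → b ≠ w₂ → F none * F (some b) = F (some b) * F none := by
      intro b hb1 hbu hb2
      ext x
      rcases x with x | x <;> simp [F, s1, s2, hb1, hbu, hb2]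
    intro a b hab
    rw [SimpleGraph.compl_adj] at hab
    obtain ⟨hne', hnadj⟩ := hab
    rcases a with _ | a <;> rcases b with _ | b
    · rfl
    · simp [MinusGraph] at hnadj
      exact key b (by tauto) (by tauto) (by tauto)
    · simp [MinusGraph] at hnadj
      exact (key a (by tauto) (by tauto) (by tauto)).symm
    · have hn : a ≠ b := fun h => hne' (by rw [h])
      have hE : Λ.Adj a b →
          ((a = u ∧ b = w₁) ∨ (a = w₁ ∧ b = u) ∨ (a = u ∧ b = w₂) ∨ (a = w₂ ∧ b = u)) := by
        intro h
        by_contra hc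
        exact hnadj (by
          simp only [MinusGraph, SimpleGraph.fromRel_adj]
          exact ⟨hne', Or.inl ⟨h, hc⟩⟩)
      have e1 : s1 a * s1 b = s1 b * s1 a := by
        by_cases ha : a = u
        · simp [s1, ha]
        by_cases hb : b = u
        · simp [s1, hb]
        simp only [s1, ha, hb, if_false]
        apply raag_comm
        rw [SimpleGraph.compl_adj]
        exact ⟨hn, fun h => by have := hE h; tauto⟩
      have e2 : s2 a * s2 b = s2 b * s2 a := by
        by_cases ha : a = w₁ ∨ a = w₂
        · simp [s2, ha]
        by_cases hb : b = w₁ ∨ b = w₂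
        · simp [s2, hb]
        simp only [s2, ha, hb, if_false]
        apply raag_comm
        rw [SimpleGraph.compl_adj]
        exact ⟨hn, fun h => by have := hE h; tauto⟩
      ext x
      rcases x with x | x
      · simp [F, ← mul_assoc, e1]
      · simp [F, ← mul_assoc, e2])
  have main : ∀ g : GG Λ, ∀ a : GG Λ, ψ (φ g) (Sum.inl a) = Sum.inl (g * a) := by
    intro g
    have hg : g ∈ Subgroup.closure (Set.range (PresentedGroup.of (rels := raagRels Λᶜ))) := by
      rw [PresentedGroup.closure_range_of]; trivial
    induction hg using Subgroup.closure_induction with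
    | mem x hx =>
      obtain ⟨y, rfl⟩ := hx
      intro a
      rw [hφ]
      by_cases hy : y = u
      · subst hy
        simp only [if_true, map_mul, map_inv, hψ]
        have : (F none)⁻¹ (Sum.inl a) = Sum.inr a := rfl
        simp only [Equiv.Perm.mul_apply, this]
        simp [F, s2, hu1, hu2]
      · simp only [hy, if_false, hψ]
        simp [F, s1, hy]
    | one => intro a; simp
    | mul x y _ _ hx hy => intro a; simp [hx, hy, mul_assoc]
    | inv x _ hx =>
      intro a
      rw [map_inv, map_inv, Equiv.Perm.inv_eq_iff_eq, hx]
      simp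
  refine ⟨φ, fun g h hgh => ?_⟩
  have a1 := main g 1
  have a2 := main h 1
  rw [hgh, a2] at a1
  simpa using (Sum.inl_injective a1).symm
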